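/- arXiv:2407.01269 — 2 statements merged into one kernel-verified Lean document; each statement's English description precedes it below -/
import Mathlib

section
/- For x, y ∈ ℝ with xy ≠ 0, the (conditionally convergent, principal value) integral ∫_{−∞}^{+∞} e^{2πitx}/(2πit + y) dt equals 0 if xy < 0, and equals sign(y)·e^{−xy} if xy > 0. -/
open scoped BigOperators

/-!
The function `t ↦ (2πit + a)⁻¹` with `0 < re a` is the Fourier transform of the one-sided
exponential `s ↦ 1_{s > 0} e^{-as}`, which is integrable and differentiable away from `0`, so the
principal value integral is its Fourier inversion integral at `x ≠ 0`. The reflection `t ↦ -t`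
reduces `re a < 0` to `0 < re a`.

Symmetric Fourier inversion under Dini's condition follows from an argument of Chernoff.
Translating and subtracting a Gaussian reduces to an integrable `f` for which `q(s) = f(s) / s` is
also integrable. Then `𝓕 f` is, up to a constant, the derivative of `𝓕 q`, so its integral over
`[-R, R]` is a difference of values of `𝓕 q` at `±R`, which vanishes in the limit by the
Riemann–Lebesgue lemma.
-/

section FourierInversion

open Filter MeasureTheory Set Topology
open scoped FourierTransform

variable {E : Type*} [NormedAddCommGroup E] [NormedSpace ℂ E]

section General

variable {V : Type*} [NormedAddCommGroup V] [InnerProductSpace ℝ V] [FiniteDimensional ℝ V]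
  [MeasurableSpace V] [BorelSpace V]

lemma continuous_fourier_of_integrable {f : V → E} (hf : Integrable f) : Continuous (𝓕 f) :=
  VectorFourier.fourierIntegral_continuous Real.continuous_fourierChar continuous_inner hf

lemma fourier_sub_of_integrable {f g : V → E} (hf : Integrable f) (hg : Integrable g) (w : V) :
    𝓕 (f - g) w = 𝓕 f w - 𝓕 g w := by
  simp only [Real.fourier_eq, Pi.sub_apply, smul_sub]
  exact integral_sub ((Real.fourierIntegral_convergent_iff w).2 hf)
    ((Real.fourierIntegral_convergent_iff w).2 hg)

lemma fourier_comp_add_right (f : V → E) (v w : V) :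
    𝓕 (fun u ↦ f (u + v)) w = 𝐞 (inner ℝ v w) • 𝓕 f w :=
  congrFun (VectorFourier.fourierIntegral_comp_add_right 𝐞 volume (innerₗ V) f v) w

lemma fourier_smul_const [CompleteSpace E] (f : V → ℂ) (c : E) (w : V) :
    𝓕 (fun v ↦ f v • c) w = 𝓕 f w • c := by
  simp only [Real.fourier_eq, ← integral_smul_const, smul_assoc]

end General

lemma fourier_gaussian_smul_const [CompleteSpace E] (c : E) :
    𝓕 (fun s : ℝ ↦ Complex.exp (-Real.pi * s ^ 2) • c) =
      fun s : ℝ ↦ Complex.exp (-Real.pi * s ^ 2) • c := by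
  ext ξ
  rw [fourier_smul_const]
  congr 1
  simpa using congrFun (fourier_gaussian_pi (b := 1) (by simp)) ξ

lemma integrable_inv_smul_of_integrableAtFilter {F : Type*} [NormedAddCommGroup F]
    [NormedSpace ℝ F] {μ : Measure ℝ} {f : ℝ → F} (hf : Integrable f μ)
    (hf₀ : IntegrableAtFilter (fun s ↦ s⁻¹ • f s) (𝓝 0) μ) :
    Integrable (fun s ↦ s⁻¹ • f s) μ := by
  obtain ⟨U, hU, hfU⟩ := hf₀
  obtain ⟨δ, hδ, hδU⟩ := Metric.mem_nhds_iff.1 hU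
  have away : IntegrableOn (fun s ↦ s⁻¹ • f s) (Metric.ball 0 δ)ᶜ μ := by
    refine Integrable.bdd_smul hf.integrableOn δ⁻¹
      measurable_inv.aestronglyMeasurable ?_
    filter_upwards [ae_restrict_mem measurableSet_ball.compl] with s hs
    have : δ ≤ ‖s‖ := by simpa using hs
    rw [norm_inv]
    gcongr
  rw [← integrableOn_univ, ← union_compl_self (Metric.ball (0 : ℝ) δ)]
  exact (hfU.mono_set hδU).union away

lemma integrableAtFilter_slope {F : Type*} [NormedAddCommGroup F] [NormedSpace ℝ F]
    {μ : Measure ℝ} [IsLocallyFiniteMeasure μ] [NullSingletonClass μ] {f : ℝ → F} {x : ℝ}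
    (hf : AEStronglyMeasurable f μ) (hfx : DifferentiableAt ℝ f x) :
    IntegrableAtFilter (slope f x) (𝓝 x) μ := by
  have meas : AEStronglyMeasurable (slope f x) μ :=
    (measurable_id.sub_const x).inv.aestronglyMeasurable.smul
      (hf.sub aestronglyMeasurable_const)
  have ne_x : 𝓝 x ⊓ ae μ ≤ 𝓝[≠] x :=
    inf_le_inf_left _ (le_principal_iff.2 (Measure.ae_ne μ x))
  exact (hfx.hasDerivAt.tendsto_slope.mono_left ne_x).integrableAtFilter_ae
    meas.stronglyMeasurableAtFilter (μ.finiteAt_nhds x)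

variable [CompleteSpace E]

lemma tendsto_intervalIntegral_fourier_id_smul {q : ℝ → E} (hq : Integrable q)
    (hq' : Integrable fun s : ℝ ↦ s • q s) :
    Tendsto (fun R ↦ ∫ ξ in (-R)..R, 𝓕 (fun s : ℝ ↦ s • q s) ξ) atTop (𝓝 0) := by
  set κ : ℂ := -2 * Real.pi * Complex.I
  have hκ : κ ≠ 0 := by simp [κ]
  have primitive (ξ : ℝ) : HasDerivAt (fun ξ ↦ κ⁻¹ • 𝓕 q ξ) (𝓕 (fun s : ℝ ↦ s • q s) ξ) ξ := by
    refine ((Real.hasDerivAt_fourier hq hq' ξ).const_smul κ⁻¹).congr_deriv ?_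
    simp only [Real.fourier_eq, ← integral_smul]
    congr with s
    rw [mul_smul, smul_comm κ⁻¹, inv_smul_smul₀ hκ, Complex.coe_smul]
  have ftc (R : ℝ) : ∫ ξ in (-R)..R, 𝓕 (fun s : ℝ ↦ s • q s) ξ =
      κ⁻¹ • 𝓕 q R - κ⁻¹ • 𝓕 q (-R) :=
    intervalIntegral.integral_eq_sub_of_hasDerivAt (fun ξ _ ↦ primitive ξ)
      ((continuous_fourier_of_integrable hq').intervalIntegrable _ _)
  have vanish := Real.zero_at_infty_fourier q
  have top := (vanish.mono_left atTop_le_cocompact).const_smul κ⁻¹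
  have bot := ((vanish.mono_left atBot_le_cocompact).comp
    tendsto_neg_atTop_atBot).const_smul κ⁻¹
  simpa only [ftc, smul_zero, sub_zero, Function.comp_apply] using top.sub bot

lemma tendsto_intervalIntegral_fourier_zero_of_integrableAtFilter {f : ℝ → E} (hf : Integrable f)
    (hf₀ : IntegrableAtFilter (fun s ↦ s⁻¹ • f s) (𝓝 0)) :
    Tendsto (fun R ↦ ∫ ξ in (-R)..R, 𝓕 f ξ) atTop (𝓝 0) := by
  have f_eq : (fun s : ℝ ↦ s • s⁻¹ • f s) =ᵐ[volume] f := by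
    filter_upwards [Measure.ae_ne volume 0] with s hs using smul_inv_smul₀ hs _
  have fourier_eq : 𝓕 (fun s : ℝ ↦ s • s⁻¹ • f s) = 𝓕 f := funext (Real.fourier_congr_ae f_eq)
  simpa only [fourier_eq] using tendsto_intervalIntegral_fourier_id_smul
    (integrable_inv_smul_of_integrableAtFilter hf hf₀) (hf.congr f_eq.symm)

lemma tendsto_intervalIntegral_fourier_of_integrable_fourier {f : ℝ → E} (hf : Integrable f)
    (hf' : Integrable (𝓕 f)) (hf₀ : ContinuousAt f 0) :
    Tendsto (fun R ↦ ∫ ξ in (-R)..R, 𝓕 f ξ) atTop (𝓝 (f 0)) := by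
  have inversion : ∫ ξ, 𝓕 f ξ = f 0 := by
    simpa [Real.fourierInv_eq] using hf.fourierInv_fourier_eq hf' hf₀
  rw [← inversion]
  exact intervalIntegral_tendsto_integral hf' tendsto_neg_atTop_atBot tendsto_id

lemma tendsto_intervalIntegral_fourier_of_dini_zero {f : ℝ → E} {c : E} (hf : Integrable f)
    (hfc : IntegrableAtFilter (fun s ↦ s⁻¹ • (f s - c)) (𝓝 0)) :
    Tendsto (fun R ↦ ∫ ξ in (-R)..R, 𝓕 f ξ) atTop (𝓝 c) := by
  set g : ℝ → E := fun s ↦ Complex.exp (-Real.pi * s ^ 2) • c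
  have g_zero : g 0 = c := by simp [g]
  have g_diff : Differentiable ℝ g := by fun_prop
  have g_int : Integrable g :=
    (integrable_cexp_neg_mul_sq (b := Real.pi) (by simpa using Real.pi_pos)).smul_const c
  have fourier_g : 𝓕 g = g := fourier_gaussian_smul_const c
  have g_tendsto := tendsto_intervalIntegral_fourier_of_integrable_fourier g_int
    (fourier_g.symm ▸ g_int) g_diff.continuous.continuousAt
  have dini : IntegrableAtFilter (fun s ↦ s⁻¹ • (f - g) s) (𝓝 0) := by
    convert hfc.sub (integrableAtFilter_slope g_int.1 (g_diff 0)) using 1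
    ext s
    simp only [Pi.sub_apply, slope, g_zero, sub_zero, vsub_eq_sub, ← smul_sub,
      sub_sub_sub_cancel_right]
  have sub_tendsto := tendsto_intervalIntegral_fourier_zero_of_integrableAtFilter
    (hf.sub g_int) dini
  have split (R : ℝ) : (∫ ξ in (-R)..R, 𝓕 (f - g) ξ) + ∫ ξ in (-R)..R, 𝓕 g ξ =
      ∫ ξ in (-R)..R, 𝓕 f ξ := by
    rw [← intervalIntegral.integral_add
      ((continuous_fourier_of_integrable (hf.sub g_int)).intervalIntegrable _ _)
      ((continuous_fourier_of_integrable g_int).intervalIntegrable _ _)]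
    simp only [fourier_sub_of_integrable hf g_int, sub_add_cancel]
  simpa only [split, zero_add, g_zero] using sub_tendsto.add g_tendsto

theorem tendsto_intervalIntegral_fourierChar_smul_fourier_of_dini {f : ℝ → E} {x : ℝ} {c : E}
    (hf : Integrable f) (hfc : IntegrableAtFilter (fun s ↦ s⁻¹ • (f (s + x) - c)) (𝓝 0)) :
    Tendsto (fun R ↦ ∫ ξ in (-R)..R, 𝐞 (ξ * x) • 𝓕 f ξ) atTop (𝓝 c) := by
  simpa only [fourier_comp_add_right, RCLike.inner_apply, conj_trivial] using
    tendsto_intervalIntegral_fourier_of_dini_zero (hf.comp_add_right x) hfc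

theorem tendsto_intervalIntegral_fourierChar_smul_fourier {f : ℝ → E} {x : ℝ}
    (hf : Integrable f) (hfx : DifferentiableAt ℝ f x) :
    Tendsto (fun R ↦ ∫ ξ in (-R)..R, 𝐞 (ξ * x) • 𝓕 f ξ) atTop (𝓝 (f x)) := by
  have shift_diff : DifferentiableAt ℝ (fun s ↦ f (s + x)) 0 :=
    differentiableAt_comp_add_const.2 (by simpa using hfx)
  apply tendsto_intervalIntegral_fourierChar_smul_fourier_of_dini hf
  simpa [slope_fun_def] using integrableAtFilter_slope (hf.comp_add_right x).1 shift_diff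

end FourierInversion

section OneSidedExponential

open Complex Filter MeasureTheory Set Topology
open scoped FourierTransform

/-- The one-sided exponential `s ↦ 1_{s > 0} e^{-as}`, whose Fourier transform for `0 < re a` is
`t ↦ (2πit + a)⁻¹`. -/
noncomputable def oneSidedExp (a : ℂ) : ℝ → ℂ :=
  (Ioi 0).indicator fun s ↦ exp (-a * s)

variable {a : ℂ}

lemma integrable_oneSidedExp (ha : 0 < a.re) : Integrable (oneSidedExp a) :=
  (integrable_indicator_iff measurableSet_Ioi).2
    (integrableOn_exp_mul_complex_Ioi (by simpa using ha) 0)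

lemma differentiableAt_oneSidedExp {x : ℝ} (hx : x ≠ 0) :
    DifferentiableAt ℝ (oneSidedExp a) x := by
  rcases hx.lt_or_gt with hneg | hpos
  · refine (differentiableAt_const (0 : ℂ)).congr_of_eventuallyEq ?_
    filter_upwards [Iio_mem_nhds hneg] with s hs
    exact indicator_of_notMem (notMem_Ioi.2 hs.le) _
  · have smooth : DifferentiableAt ℝ (fun s : ℝ ↦ exp (-a * s)) x := by fun_prop
    refine smooth.congr_of_eventuallyEq ?_
    filter_upwards [Ioi_mem_nhds hpos] with s hs using indicator_of_mem hs _

lemma fourier_oneSidedExp (ha : 0 < a.re) (t : ℝ) :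
    𝓕 (oneSidedExp a) t = (2 * Real.pi * I * t + a)⁻¹ := by
  have integrand (s : ℝ) : exp (↑(-2 * Real.pi * s * t) * I) • oneSidedExp a s =
      (Ioi 0).indicator (fun s : ℝ ↦ exp (-(2 * Real.pi * I * t + a) * s)) s := by
    rw [oneSidedExp, ← indicator_smul_apply (Ioi 0)
      (fun s : ℝ ↦ exp (↑(-2 * Real.pi * s * t) * I))]
    congr with s
    rw [smul_eq_mul, ← exp_add]
    push_cast
    ring_nf
  rw [Real.fourier_real_eq_integral_exp_smul]
  simp only [integrand]
  rw [integral_indicator measurableSet_Ioi, integral_exp_mul_complex_Ioi (by simpa using ha)]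
  rw [ofReal_zero, mul_zero, exp_zero, neg_div_neg_eq, one_div]

lemma tendsto_intervalIntegral_exp_div_oneSidedExp {x : ℝ} (hx : x ≠ 0) (ha : 0 < a.re) :
    Tendsto (fun R : ℝ ↦ ∫ t in (-R)..R,
      exp (2 * Real.pi * I * t * x) / (2 * Real.pi * I * t + a)) atTop
      (𝓝 (oneSidedExp a x)) := by
  refine (tendsto_intervalIntegral_fourierChar_smul_fourier (integrable_oneSidedExp ha)
    (differentiableAt_oneSidedExp hx)).congr fun R ↦ intervalIntegral.integral_congr fun t _ ↦ ?_
  rw [fourier_oneSidedExp ha, Circle.smul_def, Real.fourierChar_apply, smul_eq_mul,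
    div_eq_mul_inv]
  push_cast
  ring_nf

lemma intervalIntegral_exp_div_neg_neg (x R : ℝ) (a : ℂ) :
    ∫ t in (-R)..R, exp (2 * Real.pi * I * t * (-x : ℝ)) / (2 * Real.pi * I * t + -a) =
      -∫ t in (-R)..R, exp (2 * Real.pi * I * t * x) / (2 * Real.pi * I * t + a) := by
  rw [← intervalIntegral.integral_neg, ← neg_neg R, ← intervalIntegral.integral_comp_neg, neg_neg]
  congr with t
  rw [← div_neg]
  push_cast
  ring_nf

theorem principal_value_exp_over_linear_general {x : ℝ} {a : ℂ} (h : x * a.re ≠ 0) :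
    Tendsto (fun R : ℝ ↦ ∫ t in (-R)..R,
      exp (2 * Real.pi * I * t * x) / (2 * Real.pi * I * t + a)) atTop
      (𝓝 (if x * a.re < 0 then 0 else (Real.sign a.re : ℂ) * exp (-(x * a)))) := by
  obtain ⟨hx, ha⟩ := mul_ne_zero_iff.1 h
  rcases ha.lt_or_gt with hneg | hpos
  · have reflected := (tendsto_intervalIntegral_exp_div_oneSidedExp (neg_ne_zero.2 hx)
      (a := -a) (by simpa using hneg)).neg
    simp only [intervalIntegral_exp_div_neg_neg, neg_neg] at reflected
    convert reflected using 2
    rcases hx.lt_or_gt with hx | hx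
    · simp [oneSidedExp, hx, Real.sign_of_neg hneg, (mul_pos_of_neg_of_neg hx hneg).not_gt,
        mul_comm]
    · simp [oneSidedExp, hx.not_gt, mul_neg_of_pos_of_neg hx hneg]
  · convert tendsto_intervalIntegral_exp_div_oneSidedExp hx hpos using 2
    rcases hx.lt_or_gt with hx | hx
    · simp [oneSidedExp, hx.not_gt, mul_neg_of_neg_of_pos hx hpos]
    · simp [oneSidedExp, hx, Real.sign_of_pos hpos, (mul_pos hx hpos).not_gt, mul_comm]

end OneSidedExponential

/-- for `x, y ∈ ℝ` with `xy ≠ 0`, the principal value integral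
`∫_{-∞}^{∞} e^{2πitx}/(2πit + y) dt` (i.e. the limit of `∫_{-R}^{R}` as `R → ∞`)
equals `0` if `xy < 0` and `sign(y) e^{-xy}` if `xy > 0`. -/
theorem principal_value_exp_over_linear
    (x y : ℝ) (hxy : x * y ≠ 0) :
    Filter.Tendsto
      (fun R : ℝ => ∫ t in (-R)..R,
        Complex.exp (2 * Real.pi * Complex.I * t * x) /
          (2 * Real.pi * Complex.I * t + y))
      Filter.atTop
      (nhds (if x * y < 0 then 0
        else (Real.sign y : ℂ) * Real.exp (-(x * y)))) := by
  simpa using principal_value_exp_over_linear_general (a := y) hxy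
end

section
/- Let H : (ℝ_{≥0})^n → ℂ be a C^∞ function all of whose partial derivatives ∂^k H (k ∈ ℕ^n) have sufficient decay at infinity. Then the integral Λ(H, s) = (∏_{i=1}^n 1/Γ(s_i)) ∫_{(ℝ_{≥0})^n} H(y) ∏_{i=1}^n y_i^{s_i} dy_i/y_i converges absolutely for 0 < Re(s_i) < 1/n (all i) and the resulting holomorphic function of s = (s_1,…,s_n) extends analytically to the domain {s ∈ ℂ^n : Re(s_i) < 1/n for all i}. -/
open scoped BigOperators

/-- The closed positive quadrant `(ℝ_{≥0})^n`. -/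
def Quadrant (n : ℕ) : Set (Fin n → ℝ) := {y | ∀ i, 0 ≤ y i}

/-- `F` has *sufficient decay at infinity on `S`*: it is, on `S`, a finite sum of functions
`G_i` with `(1 + |L_i(y)|) G_i(y)` bounded on `S`, `L_i` a linear form with all coefficients
nonzero. -/
def SufficientDecayOn (n : ℕ) (S : Set (Fin n → ℝ)) (F : (Fin n → ℝ) → ℂ) : Prop :=
  ∃ (r : ℕ) (G : Fin r → (Fin n → ℝ) → ℂ) (L : Fin r → Fin n → ℝ),
    (∀ i j, L i j ≠ 0) ∧
    (∀ i, ∃ C : ℝ, ∀ y ∈ S, (1 + |∑ j, L i j * y j|) * ‖G i y‖ ≤ C) ∧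
    (∀ y ∈ S, F y = ∑ i, G i y)

/-- The signed partial derivative `-∂/∂y_i`. -/
noncomputable def pderivNeg (n : ℕ) (i : Fin n) (H : (Fin n → ℝ) → ℂ) :
    (Fin n → ℝ) → ℂ :=
  fun y => -(fderiv ℝ H y (Pi.single i 1))

/-- Iterated signed partial derivatives along a list of directions. -/
noncomputable def pderivList (n : ℕ) : List (Fin n) → ((Fin n → ℝ) → ℂ) → (Fin n → ℝ) → ℂ
  | [], H => H
  | (i :: l), H => pderivNeg n i (pderivList n l H)

/-!
Integrating by parts near `yᵢ = 0` trades `yᵢ ^ (sᵢ - 1) / Γ(sᵢ)` for `yᵢ ^ sᵢ / Γ(sᵢ + 1)`, at the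
price of differentiating `H`; the reciprocal Gamma factor absorbs the pole. A smooth cutoff splits
each variable into a part near the origin, where this is iterated until the exponent is harmless,
and a part away from the origin, where nothing needs to be done. What is left is absolute
convergence, obtained by integrating out one variable at a time with
`∫ y ^ (σ - 1) (1 + |c y + M|) ^ (-a) dy ≤ C (1 + |M|) ^ (σ - a)`, and analyticity in `s`, where the
integrand depends on `s` through the exponential of a linear form.
-/

open MeasureTheory Filter Set Topology Complex Asymptotics

section PowerSeriesIntegral

variable {α 𝕜 E F : Type*} [MeasurableSpace α] {μ : Measure α} [RCLike 𝕜]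
  [NormedAddCommGroup E] [NormedSpace 𝕜 E]
  [NormedAddCommGroup F] [NormedSpace 𝕜 F] [NormedSpace ℝ F]

theorem hasFPowerSeriesOnBall_integral_of_dominated {f : α → E → F}
    {p : α → FormalMultilinearSeries 𝕜 E F} {x : E} {r : NNReal} {bound : α → ℝ} (hr : 0 < r)
    (hf : ∀ᵐ a ∂μ, HasFPowerSeriesOnBall (f a) (p a) x r)
    (hp : ∀ m, AEStronglyMeasurable (fun a => p a m) μ)
    (hbound : ∀ᵐ a ∂μ, ∀ m, ‖p a m‖ * r ^ m ≤ bound a) (hint : Integrable bound μ) :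
    HasFPowerSeriesOnBall (fun z => ∫ a, f a z ∂μ) (fun m => ∫ a, p a m ∂μ) x r := by
  have norm_le (m : ℕ) : ∀ᵐ a ∂μ, ‖p a m‖ ≤ ((r : ℝ) ^ m)⁻¹ * bound a := by
    filter_upwards [hbound] with a ha
    rw [← div_eq_inv_mul, le_div_iff₀ (by positivity)]
    exact ha m
  have integrable_coeff (m : ℕ) : Integrable (fun a => p a m) μ :=
    (hint.const_mul _).mono' (hp m) (norm_le m)
  refine ⟨FormalMultilinearSeries.le_radius_of_bound _ (∫ a, bound a ∂μ) fun m => ?_,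
    by exact_mod_cast hr, fun {z} hz => ?_⟩
  · calc ‖∫ a, p a m ∂μ‖ * r ^ m ≤ (∫ a, ‖p a m‖ ∂μ) * r ^ m := by
          gcongr
          exact norm_integral_le_integral_norm _
      _ = ∫ a, ‖p a m‖ * r ^ m ∂μ := (integral_mul_const _ _).symm
      _ ≤ ∫ a, bound a ∂μ :=
          integral_mono_ae ((integrable_coeff m).norm.mul_const _) hint
            (hbound.mono fun a ha => ha m)
  · have hzr : ‖z‖ / r < 1 := by
      rw [div_lt_one (by exact_mod_cast hr)]
      simpa [enorm_eq_nnnorm, ← NNReal.coe_lt_coe] using hz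
    simp_rw [ContinuousMultilinearMap.integral_apply (integrable_coeff _)]
    refine hasSum_integral_of_dominated_convergence (fun m a => (‖z‖ / r) ^ m * bound a)
      (fun m => ?_) (fun m => ?_)
      (.of_forall fun a => (summable_geometric_of_lt_one (by positivity) hzr).mul_right _) ?_ ?_
    · exact (ContinuousMultilinearMap.apply 𝕜 (fun _ : Fin m => E) F
        fun _ => z).continuous.comp_aestronglyMeasurable (hp m)
    · filter_upwards [norm_le m] with a ha
      calc ‖p a m fun _ => z‖ ≤ ‖p a m‖ * ‖z‖ ^ m :=
            (p a m).le_opNorm_mul_pow_of_le (pi_norm_const_le z)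
        _ ≤ ((r : ℝ) ^ m)⁻¹ * bound a * ‖z‖ ^ m := by gcongr
        _ = (‖z‖ / r) ^ m * bound a := by rw [div_pow]; ring
    · simp_rw [tsum_mul_right]
      exact hint.const_mul _
    · filter_upwards [hf] with a ha
      exact ha.hasSum hz

end PowerSeriesIntegral

section ExpIntegral

variable {E : Type*} [NormedAddCommGroup E] [NormedSpace ℂ E]

theorem hasFPowerSeriesOnBall_exp_clm_sub (u : E →L[ℂ] ℂ) (x : E) :
    HasFPowerSeriesOnBall (fun z => exp (u (z - x)))
      ((NormedSpace.expSeries ℂ ℂ).compContinuousLinearMap u) x ⊤ := by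
  have hexp : HasFPowerSeriesOnBall (NormedSpace.exp : ℂ → ℂ) (NormedSpace.expSeries ℂ ℂ)
      (u 0) ⊤ := by
    simpa only [map_zero] using NormedSpace.exp_hasFPowerSeriesOnBall (𝕂 := ℂ) (𝔸 := ℂ)
  have hcomp := hexp.compContinuousLinearMap.comp_sub x
  rw [zero_add, ENNReal.top_div_of_ne_top enorm_ne_top] at hcomp
  simpa only [Complex.exp_eq_exp_ℂ, Function.comp_apply] using hcomp

theorem norm_expSeries_comp_clm_le (u : E →L[ℂ] ℂ) (m : ℕ) :
    ‖(NormedSpace.expSeries ℂ ℂ).compContinuousLinearMap u m‖ ≤ ‖u‖ ^ m / m.factorial := by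
  have hseries : ‖NormedSpace.expSeries ℂ ℂ m‖ ≤ (m.factorial : ℝ)⁻¹ := by
    simp [NormedSpace.expSeries, norm_smul]
  calc _ ≤ ‖NormedSpace.expSeries ℂ ℂ m‖ * ∏ _ : Fin m, ‖u‖ :=
        (NormedSpace.expSeries ℂ ℂ m).norm_compContinuousLinearMap_le fun _ => u
    _ ≤ (m.factorial : ℝ)⁻¹ * ∏ _ : Fin m, ‖u‖ := by gcongr
    _ = ‖u‖ ^ m / m.factorial := by simp [div_eq_inv_mul]

theorem continuous_compContinuousLinearMap_const {m : ℕ}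
    (q : ContinuousMultilinearMap ℂ (fun _ : Fin m => ℂ) ℂ) :
    Continuous fun u : E →L[ℂ] ℂ => q.compContinuousLinearMap fun _ => u :=
  (ContinuousLinearMap.apply ℂ _ q).continuous.comp
    ((ContinuousMultilinearMap.compContinuousLinearMapContinuousMultilinear ℂ
      (fun _ : Fin m => E) (fun _ => ℂ) ℂ).cont.comp (continuous_pi fun _ => continuous_id))

theorem analyticAt_integral_exp_mul {α : Type*} [MeasurableSpace α] {μ : Measure α}
    {v : α → E →L[ℂ] ℂ} {g : α → ℂ} {r : ℝ} (hr : 0 < r)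
    (hv : AEStronglyMeasurable v μ) (hg : AEStronglyMeasurable g μ)
    (hint : Integrable (fun a => Real.exp (r * ‖v a‖) * ‖g a‖) μ) (x : E) :
    AnalyticAt ℂ (fun z => ∫ a, g a * exp (v a (z - x)) ∂μ) x := by
  lift r to NNReal using hr.le
  let p (a : α) : FormalMultilinearSeries ℂ E ℂ :=
    g a • (NormedSpace.expSeries ℂ ℂ).compContinuousLinearMap (v a)
  have hasSeries (a : α) : HasFPowerSeriesOnBall (fun z => g a * exp (v a (z - x))) (p a) x r :=
    ((hasFPowerSeriesOnBall_exp_clm_sub (v a) x).const_smul (c := g a)).mono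
      (ENNReal.coe_pos.2 hr) le_top
  have measurable_coeff (m : ℕ) : AEStronglyMeasurable (fun a => p a m) μ :=
    hg.smul ((continuous_compContinuousLinearMap_const _).comp_aestronglyMeasurable hv)
  have coeff_le (a : α) (m : ℕ) : ‖p a m‖ * r ^ m ≤ Real.exp (r * ‖v a‖) * ‖g a‖ :=
    calc ‖p a m‖ * r ^ m
        = ‖g a‖ * ‖(NormedSpace.expSeries ℂ ℂ).compContinuousLinearMap (v a) m‖ * r ^ m := by
          rw [← norm_smul]; rfl
      _ ≤ ‖g a‖ * (‖v a‖ ^ m / m.factorial) * r ^ m := by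
          gcongr
          exact norm_expSeries_comp_clm_le (v a) m
      _ = (r * ‖v a‖) ^ m / m.factorial * ‖g a‖ := by rw [mul_pow]; ring
      _ ≤ Real.exp (r * ‖v a‖) * ‖g a‖ := by
          gcongr
          exact Real.pow_div_factorial_le_exp _ (by positivity) m
  exact (hasFPowerSeriesOnBall_integral_of_dominated (by exact_mod_cast hr)
    (.of_forall hasSeries) measurable_coeff (.of_forall coeff_le) hint).analyticAt

end ExpIntegral

section Gluing

variable {𝕜 E F : Type*} [NontriviallyNormedField 𝕜] [NormedAddCommGroup E] [NormedSpace 𝕜 E]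
  [NormedAddCommGroup F] [NormedSpace 𝕜 F]

theorem exists_analyticOnNhd_iUnion {ι : Type*} [SemilatticeSup ι] [Nonempty ι] {U : ι → Set E}
    {V : Set E} {f : E → F} (hU : Monotone U) (hUo : ∀ k, IsOpen (U k))
    (hUc : ∀ k, IsPreconnected (U k)) (hVo : IsOpen V) (hV : V.Nonempty) (hVU : ∀ k, V ⊆ U k)
    (hf : ∀ k, ∃ g, AnalyticOnNhd 𝕜 g (U k) ∧ EqOn g f V) :
    ∃ g, AnalyticOnNhd 𝕜 g (⋃ k, U k) ∧ EqOn g f V := by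
  choose g hg hgf using hf
  obtain ⟨x₀, hx₀⟩ := hV
  have eqOn_of_le {j k : ι} (hjk : j ≤ k) : EqOn (g j) (g k) (U j) :=
    (hg j).eqOn_of_preconnected_of_eventuallyEq ((hg k).mono (hU hjk)) (hUc j) (hVU j hx₀) <| by
      filter_upwards [hVo.mem_nhds hx₀] with x hx
      rw [hgf j hx, hgf k hx]
  have eqOn_inter (j k : ι) : EqOn (g j) (g k) (U j ∩ U k) := fun x hx =>
    (eqOn_of_le le_sup_left hx.1).trans (eqOn_of_le (le_sup_right (a := j)) hx.2).symm
  choose! k hk using fun x : E => (mem_iUnion (s := U)).1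
  refine ⟨fun x => g (k x) x, fun x hx => ?_, fun x hx => hgf _ hx⟩
  refine (hg _ x (hk x hx)).congr ?_
  filter_upwards [(hUo (k x)).mem_nhds (hk x hx)] with y hy
  exact eqOn_inter _ _ ⟨hy, hk y (mem_iUnion_of_mem _ hy)⟩

end Gluing

section OneDimensional

variable {c σ a : ℝ}

theorem locallyIntegrable_abs_affine_rpow (hc : c ≠ 0) (b : ℝ) (ha : a < 1) :
    LocallyIntegrable fun t : ℝ => |c * t + b| ^ (-a) := by
  have hpow : LocallyIntegrable fun t : ℝ => |t| ^ (-a) :=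
    locallyIntegrable_of_norm_le_rpow (C := 1) (α := a) (by simp) (by simpa using ha)
      (.of_forall fun t => by simp [abs_of_nonneg (Real.rpow_nonneg (abs_nonneg t) _)])
      (by fun_prop : Measurable fun t : ℝ => |t| ^ (-a)).aestronglyMeasurable
  rw [← map_add_right_eq_self volume (b / c), ← Homeomorph.coe_addRight,
    locallyIntegrable_map_homeomorph] at hpow
  refine (hpow.smul (|c| ^ (-a))).congr (.of_forall fun t => ?_)
  simp only [Pi.smul_apply, smul_eq_mul, Function.comp_apply, Homeomorph.coe_addRight]
  rw [← Real.mul_rpow (abs_nonneg _) (abs_nonneg _), ← abs_mul, mul_add, mul_div_cancel₀ _ hc]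

theorem isTheta_affine_atTop (hc : c ≠ 0) (b : ℝ) : (fun t => c * t + b) =Θ[atTop] (id : ℝ → ℝ) :=
  ((isTheta_refl id atTop).const_mul_left hc).add_isLittleO
    (isLittleO_const_id_atTop b)

theorem integrableOn_rpow_mul_abs_affine_rpow (hc : c ≠ 0) {b : ℝ} (hb : b ≠ 0) (hσ : 0 < σ)
    (hσa : σ < a) (ha : a < 1) :
    IntegrableOn (fun t : ℝ => t ^ (σ - 1) * |c * t + b| ^ (-a)) (Ioi 0) := by
  refine mellin_convergent_of_isBigO_scalar
    ((locallyIntegrable_abs_affine_rpow hc b ha).locallyIntegrableOn _) (a := a) ?_ hσa (b := 0)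
    ?_ hσ
  · exact ((isTheta_affine_atTop hc b).norm_left.rpow (.of_forall fun t => norm_nonneg _)
      (eventually_ge_atTop 0)).isBigO
  · have hcont : ContinuousAt (fun t : ℝ => |c * t + b| ^ (-a)) 0 :=
      ContinuousAt.rpow_const (by fun_prop) (Or.inl (by simpa using hb))
    simpa using (hcont.tendsto.isBigO_one ℝ).mono nhdsWithin_le_nhds

theorem integral_rpow_mul_abs_affine_rpow_mul {R : ℝ} (hR : 0 < R) (c b σ a : ℝ) :
    ∫ y in Ioi 0, y ^ (σ - 1) * |c * y + R * b| ^ (-a) =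
      R ^ (σ - a) * ∫ t in Ioi 0, t ^ (σ - 1) * |c * t + b| ^ (-a) := by
  have homogeneous : ∀ t ∈ Ioi (0 : ℝ), (R * t) ^ (σ - 1) * |c * (R * t) + R * b| ^ (-a) =
      R ^ (σ - a) / R * (t ^ (σ - 1) * |c * t + b| ^ (-a)) := fun t ht => by
    rw [show c * (R * t) + R * b = R * (c * t + b) by ring, abs_mul, abs_of_pos hR,
      Real.mul_rpow hR.le (le_of_lt ht), Real.mul_rpow hR.le (abs_nonneg _),
      ← Real.rpow_sub_one hR.ne', show σ - a - 1 = (σ - 1) + (-a) by ring, Real.rpow_add hR]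
    ring
  have hscale := integral_comp_mul_left_Ioi' (fun y => y ^ (σ - 1) * |c * y + R * b| ^ (-a)) 0 hR
  rw [mul_zero] at hscale
  rw [← hscale, setIntegral_congr_fun measurableSet_Ioi homogeneous, integral_const_mul,
    smul_eq_mul, ← mul_assoc, mul_div_cancel₀ _ hR.ne']

theorem lintegral_rpow_mul_one_add_abs_affine_rpow_le (hc : c ≠ 0) (hσ : 0 < σ) (hσa : σ < a)
    (ha : a < 1) : ∃ C : ENNReal, C ≠ ⊤ ∧ ∀ M : ℝ,
      ∫⁻ y in Ioi 0, ENNReal.ofReal (y ^ (σ - 1)) * ENNReal.ofReal ((1 + |c * y + M|) ^ (-a)) ≤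
        C * ENNReal.ofReal ((1 + |M|) ^ (σ - a)) := by
  -- With `b = ±1` the sign of `M`, scaling `y` by `1 + |M|` reduces to `M = b`.
  let I (b : ℝ) : ℝ := ∫ t in Ioi 0, t ^ (σ - 1) * |c * t + b| ^ (-a)
  refine ⟨ENNReal.ofReal (max (I 1) (I (-1))), ENNReal.ofReal_ne_top, fun M => ?_⟩
  obtain ⟨b, hb, hRb⟩ : ∃ b : ℝ, (b = 1 ∨ b = -1) ∧ (1 + |M|) * b = M + b := by
    rcases abs_cases M with ⟨h, -⟩ | ⟨h, -⟩
    · exact ⟨1, by simp, by rw [h]; ring⟩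
    · exact ⟨-1, by simp, by rw [h]; ring⟩
  have hIb : I b ≤ max (I 1) (I (-1)) := by
    rcases hb with rfl | rfl <;> simp
  have hb1 : |b| = 1 := by rcases hb with rfl | rfl <;> simp
  have hR : 0 < 1 + |M| := by positivity
  have hb0 : (1 + |M|) * b ≠ 0 := mul_ne_zero hR.ne' (by rw [← abs_ne_zero, hb1]; exact one_ne_zero)
  have pointwise : ∀ᵐ y ∂volume.restrict (Ioi (0 : ℝ)),
      ENNReal.ofReal (y ^ (σ - 1)) * ENNReal.ofReal ((1 + |c * y + M|) ^ (-a)) ≤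
        ENNReal.ofReal (y ^ (σ - 1) * |c * y + (1 + |M|) * b| ^ (-a)) := by
    filter_upwards [ae_restrict_mem measurableSet_Ioi,
      ae_restrict_of_ae (Measure.ae_ne volume (-((1 + |M|) * b) / c))] with y hy hne
    have hne : c * y + (1 + |M|) * b ≠ 0 := fun h => hne (by field_simp; linarith)
    have hle : |c * y + (1 + |M|) * b| ≤ 1 + |c * y + M| := by
      rw [hRb, ← add_assoc, add_comm 1, ← hb1]
      exact abs_add_le _ _
    rw [ENNReal.ofReal_mul (Real.rpow_nonneg (le_of_lt hy) _)]
    gcongr _ * ENNReal.ofReal ?_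
    exact Real.rpow_le_rpow_of_nonpos (abs_pos.2 hne) hle (neg_nonpos.2 (hσ.trans hσa).le)
  calc _ ≤ ∫⁻ y in Ioi 0, ENNReal.ofReal (y ^ (σ - 1) * |c * y + (1 + |M|) * b| ^ (-a)) :=
        lintegral_mono_ae pointwise
    _ = ENNReal.ofReal (I b * (1 + |M|) ^ (σ - a)) := by
        rw [← ofReal_integral_eq_lintegral_ofReal
          (integrableOn_rpow_mul_abs_affine_rpow hc hb0 hσ hσa ha),
          integral_rpow_mul_abs_affine_rpow_mul hR, mul_comm]
        filter_upwards [ae_restrict_mem measurableSet_Ioi] with y hy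
        exact mul_nonneg (Real.rpow_nonneg (le_of_lt hy) _) (by positivity)
    _ ≤ _ := by
        rw [ENNReal.ofReal_mul' (by positivity)]
        gcongr

end OneDimensional

section Orthant

/-- Lebesgue measure on the open orthant `(0, ∞)^n`, as a product measure. -/
noncomputable abbrev orthantMeasure (n : ℕ) : Measure (Fin n → ℝ) :=
  Measure.pi fun _ => volume.restrict (Ioi 0)

theorem ae_orthantMeasure_pos (n : ℕ) : ∀ᵐ y ∂orthantMeasure n, ∀ i, 0 < y i :=
  ae_all_iff.2 fun i => (Measure.quasiMeasurePreserving_eval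
    (fun _ => volume.restrict (Ioi (0 : ℝ))) i).ae (ae_restrict_mem measurableSet_Ioi)

theorem volume_restrict_quadrant (n : ℕ) : volume.restrict (Quadrant n) = orthantMeasure n := by
  have quadrant_eq : Quadrant n = univ.pi fun _ => Ici 0 := by
    ext y
    simp [Quadrant, Pi.le_def]
  rw [quadrant_eq, volume_pi, Measure.restrict_pi_pi]
  congr 1
  ext1
  exact Measure.restrict_congr_set Ioi_ae_eq_Ici.symm

theorem lintegral_orthantMeasure_succ {n : ℕ} {f : (Fin (n + 1) → ℝ) → ENNReal}
    (hf : Measurable f) :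
    ∫⁻ y, f y ∂orthantMeasure (n + 1) =
      ∫⁻ y, (∫⁻ x in Ioi 0, f (Fin.cons x y)) ∂orthantMeasure n := by
  have hmp := (measurePreserving_piFinSuccAbove
    (fun _ : Fin (n + 1) => volume.restrict (Ioi (0 : ℝ))) 0).symm
  rw [← hmp.lintegral_comp hf, lintegral_prod_symm _ (by fun_prop)]
  simp only [MeasurableEquiv.piFinSuccAbove_symm_apply, Fin.insertNthEquiv_zero]
  rfl

theorem lintegral_prod_rpow_mul_one_add_abs_sum_rpow_le {n : ℕ} {c σ : Fin n → ℝ} {a : ℝ}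
    (hc : ∀ i, c i ≠ 0) (hσ : ∀ i, 0 < σ i) (hσa : ∑ i, σ i < a) (ha : a < 1) :
    ∃ C : ENNReal, C ≠ ⊤ ∧ ∀ M : ℝ,
      ∫⁻ y, (∏ i, ENNReal.ofReal (y i ^ (σ i - 1))) *
          ENNReal.ofReal ((1 + |∑ i, c i * y i + M|) ^ (-a)) ∂orthantMeasure n ≤
        C * ENNReal.ofReal ((1 + |M|) ^ (∑ i, σ i - a)) := by
  induction n generalizing a with
  | zero => exact ⟨1, ENNReal.one_ne_top, fun M => by simp⟩
  | succ n ih =>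
    rw [Fin.sum_univ_succ] at hσa
    have tail_nonneg : 0 ≤ ∑ i : Fin n, σ i.succ := Finset.sum_nonneg fun i _ => (hσ _).le
    obtain ⟨C₁, hC₁, first_le⟩ :=
      lintegral_rpow_mul_one_add_abs_affine_rpow_le (hc 0) (hσ 0) (a := a) (by linarith) ha
    obtain ⟨C₂, hC₂, rest_le⟩ := ih (a := a - σ 0) (fun i => hc i.succ) (fun i => hσ i.succ)
      (by linarith) (by linarith [hσ 0])
    refine ⟨C₁ * C₂, ENNReal.mul_ne_top hC₁ hC₂, fun M => ?_⟩
    rw [lintegral_orthantMeasure_succ (by fun_prop)]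
    simp only [Fin.prod_univ_succ, Fin.sum_univ_succ, Fin.cons_zero, Fin.cons_succ]
    have inner_le (y : Fin n → ℝ) :
        ∫⁻ x in Ioi 0,
            (ENNReal.ofReal (x ^ (σ 0 - 1)) * ∏ i, ENNReal.ofReal (y i ^ (σ (Fin.succ i) - 1))) *
              ENNReal.ofReal ((1 + |c 0 * x + ∑ i, c (Fin.succ i) * y i + M|) ^ (-a)) ≤
          C₁ * ((∏ i, ENNReal.ofReal (y i ^ (σ (Fin.succ i) - 1))) *
            ENNReal.ofReal ((1 + |∑ i, c (Fin.succ i) * y i + M|) ^ (-(a - σ 0)))) := by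
      simp_rw [mul_right_comm _ (∏ i, ENNReal.ofReal (y i ^ (σ (Fin.succ i) - 1))), add_assoc]
      rw [lintegral_mul_const _ (by fun_prop), mul_left_comm, mul_comm, neg_sub]
      gcongr
      exact first_le _
    refine (lintegral_mono inner_le).trans ?_
    rw [lintegral_const_mul _ (by fun_prop), mul_assoc,
      show σ 0 + ∑ i : Fin n, σ i.succ - a = ∑ i : Fin n, σ i.succ - (a - σ 0) by ring]
    gcongr
    exact rest_le M

theorem prod_rpow_nonneg {n : ℕ} {y : Fin n → ℝ} (hy : ∀ i, 0 < y i) (τ : Fin n → ℝ) :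
    0 ≤ ∏ i, y i ^ τ i :=
  Finset.prod_nonneg fun i _ => Real.rpow_nonneg (hy i).le _

theorem integrable_prod_rpow_mul_one_add_abs_sum_rpow {n : ℕ} {c σ : Fin n → ℝ} {a : ℝ}
    (hc : ∀ i, c i ≠ 0) (hσ : ∀ i, 0 < σ i) (hσa : ∑ i, σ i < a) (ha : a < 1) :
    Integrable (fun y : Fin n → ℝ =>
      (∏ i, y i ^ (σ i - 1)) * (1 + |∑ i, c i * y i|) ^ (-a)) (orthantMeasure n) := by
  obtain ⟨C, hC, hle⟩ := lintegral_prod_rpow_mul_one_add_abs_sum_rpow_le hc hσ hσa ha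
  refine ⟨Measurable.aestronglyMeasurable (by fun_prop), ?_⟩
  rw [hasFiniteIntegral_iff_ofReal]
  · refine lt_of_le_of_lt (le_of_eq (lintegral_congr_ae ?_))
      ((hle 0).trans_lt (ENNReal.mul_lt_top hC.lt_top ENNReal.ofReal_lt_top))
    filter_upwards [ae_orthantMeasure_pos n] with y hy
    rw [add_zero, ENNReal.ofReal_mul (prod_rpow_nonneg hy _),
      ENNReal.ofReal_prod_of_nonneg fun i _ => Real.rpow_nonneg (hy i).le _]
  · filter_upwards [ae_orthantMeasure_pos n] with y hy
    exact mul_nonneg (prod_rpow_nonneg hy _) (by positivity)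

theorem le_mul_rpow_neg_of_mul_le {A B C a : ℝ} (hA : 1 ≤ A) (hC : 0 ≤ C) (h : A * B ≤ C)
    (ha : a ≤ 1) : B ≤ C * A ^ (-a) := by
  have hA₀ : 0 < A := by positivity
  calc B ≤ C * A ^ (-1 : ℝ) := by
        rwa [Real.rpow_neg_one, ← div_eq_mul_inv, le_div_iff₀' hA₀]
    _ ≤ C * A ^ (-a) := by gcongr

theorem SufficientDecayOn.integrable_norm_mul_prod_rpow {n : ℕ} {F : (Fin n → ℝ) → ℂ}
    (hd : SufficientDecayOn n (Quadrant n) F) (hF : Continuous F) {τ : Fin n → ℝ}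
    (hτ : ∀ i, 0 < τ i) (hsum : ∑ i, τ i < 1) :
    Integrable (fun y => ‖F y‖ * ∏ i, y i ^ (τ i - 1)) (orthantMeasure n) := by
  obtain ⟨r, G, L, hL, hC, hFG⟩ := hd
  choose C hC using hC
  obtain ⟨a, hτa, ha⟩ := exists_between hsum
  have norm_le (j : Fin r) {y : Fin n → ℝ} (hy : y ∈ Quadrant n) :
      ‖G j y‖ ≤ C j * (1 + |∑ i, L j i * y i|) ^ (-a) :=
    le_mul_rpow_neg_of_mul_le (le_add_of_nonneg_right (abs_nonneg _))
      (le_trans (by positivity) (hC j y hy)) (hC j y hy) ha.le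
  refine (integrable_finsetSum Finset.univ fun j _ =>
    (integrable_prod_rpow_mul_one_add_abs_sum_rpow (hL j) hτ hτa ha).const_mul (C j)).mono'
      (hF.norm.measurable.mul (by fun_prop)).aestronglyMeasurable ?_
  filter_upwards [ae_orthantMeasure_pos n] with y hy
  have hyQ : y ∈ Quadrant n := fun i => (hy i).le
  have prod_nonneg := prod_rpow_nonneg hy fun i => τ i - 1
  rw [Real.norm_of_nonneg (by positivity), hFG y hyQ]
  calc ‖∑ j, G j y‖ * ∏ i, y i ^ (τ i - 1)
      ≤ (∑ j, C j * (1 + |∑ i, L j i * y i|) ^ (-a)) * ∏ i, y i ^ (τ i - 1) := by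
        gcongr
        exact norm_sum_le_of_le _ fun j _ => norm_le j hyQ
    _ = _ := by
        rw [Finset.sum_mul]
        exact Finset.sum_congr rfl fun j _ => by ring

end Orthant

section Cutoff

/-- A smooth cutoff, equal to `1` on `(-∞, 1]` and to `0` on `[2, ∞)`. -/
noncomputable def cutoff (y : ℝ) : ℝ := Real.smoothTransition (2 - y)

theorem contDiff_cutoff : ContDiff ℝ (⊤ : ℕ∞) cutoff :=
  Real.smoothTransition.contDiff.comp (contDiff_const.sub contDiff_id)

theorem continuous_deriv_cutoff : Continuous (deriv cutoff) :=
  contDiff_cutoff.continuous_deriv (by norm_num)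

theorem hasDerivAt_cutoff (y : ℝ) : HasDerivAt cutoff (deriv cutoff y) y :=
  (contDiff_cutoff.differentiable (by norm_num) y).hasDerivAt

theorem cutoff_of_le_one {y : ℝ} (hy : y ≤ 1) : cutoff y = 1 :=
  Real.smoothTransition.one_of_one_le (by linarith)

theorem cutoff_of_two_le {y : ℝ} (hy : 2 ≤ y) : cutoff y = 0 :=
  Real.smoothTransition.zero_of_nonpos (by linarith)

theorem abs_one_sub_cutoff_le_one (y : ℝ) : |1 - cutoff y| ≤ 1 := by
  rw [abs_le]
  constructor <;>
    linarith [Real.smoothTransition.nonneg (2 - y), Real.smoothTransition.le_one (2 - y),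
      show cutoff y = Real.smoothTransition (2 - y) from rfl]

theorem deriv_cutoff_of_lt_one {y : ℝ} (hy : y < 1) : deriv cutoff y = 0 := by
  have locally_one : cutoff =ᶠ[𝓝 y] fun _ => 1 := by
    filter_upwards [Iio_mem_nhds hy] with z hz using cutoff_of_le_one (le_of_lt hz)
  rw [locally_one.deriv_eq, deriv_const]

theorem deriv_cutoff_of_two_lt {y : ℝ} (hy : 2 < y) : deriv cutoff y = 0 := by
  have locally_zero : cutoff =ᶠ[𝓝 y] fun _ => 0 := by
    filter_upwards [Ioi_mem_nhds hy] with z hz using cutoff_of_two_le (le_of_lt hz)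
  rw [locally_zero.deriv_eq, deriv_const]

end Cutoff

/-- A one-variable kernel `Γ(s + m)⁻¹ w(y) y ^ (s + m - 1)` occurring in the Mellin transform and
in its integrations by parts, encoded by the weight `w` and the shift `m`. -/
structure MellinKernel where
  weight : ℝ → ℝ
  shift : ℕ
  continuous_weight : Continuous weight
  exists_bound : ∃ B, ∀ y, 0 < y → |weight y| ≤ B ∧ |weight y| * y ^ shift ≤ B

namespace MellinKernel

/-- The kernel without its Gamma factor. -/
noncomputable def density (κ : MellinKernel) (s : ℂ) (y : ℝ) : ℂ :=
  κ.weight y * (y : ℂ) ^ (s + κ.shift - 1)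

/-- The value `Γ(s + m)⁻¹ w(y) y ^ (s + m - 1)` of the kernel. -/
noncomputable def eval (κ : MellinKernel) (s : ℂ) (y : ℝ) : ℂ :=
  (Gamma (s + κ.shift))⁻¹ * κ.density s y

/-- The kernel with a given weight that vanishes on `(2, ∞)`. -/
def ofVanishing (w : ℝ → ℝ) (hw : Continuous w) (hw₂ : ∀ y, 2 < y → w y = 0) (m : ℕ) :
    MellinKernel where
  weight := w
  shift := m
  continuous_weight := hw
  exists_bound := by
    obtain ⟨B, hB⟩ := isCompact_Icc.exists_bound_of_continuousOn (s := Icc (0 : ℝ) 2)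
      (f := fun y => |w y| + |w y| * |y| ^ m) (by fun_prop)
    have bound_nonneg : 0 ≤ B := (norm_nonneg _).trans (hB 0 (by simp))
    refine ⟨B, fun y hy => ?_⟩
    rcases le_or_gt y 2 with hy₂ | hy₂
    · have hle := (le_abs_self _).trans (hB y ⟨hy.le, hy₂⟩)
      rw [abs_of_pos hy] at hle
      have h₁ : 0 ≤ |w y| := abs_nonneg _
      have h₂ : 0 ≤ |w y| * y ^ m := by positivity
      constructor <;> linarith
    · simp [hw₂ y hy₂, bound_nonneg]

/-- The kernel `Γ(s)⁻¹ y ^ (s - 1)` of the Mellin transform itself. -/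
def one : MellinKernel := ⟨fun _ => 1, 0, continuous_const, 1, by simp⟩

/-- The part of `MellinKernel.one` away from the origin. -/
noncomputable def tail : MellinKernel where
  weight y := 1 - cutoff y
  shift := 0
  continuous_weight := continuous_const.sub contDiff_cutoff.continuous
  exists_bound := ⟨1, fun y _ => by simpa using abs_one_sub_cutoff_le_one y⟩

/-- The kernel near the origin reached after `m` integrations by parts. -/
noncomputable def head (m : ℕ) : MellinKernel :=
  ofVanishing cutoff contDiff_cutoff.continuous (fun _ hy => cutoff_of_two_le hy.le) m

/-- The kernel arising from `MellinKernel.head` when the derivative falls on the cutoff. -/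
noncomputable def headDeriv (m : ℕ) : MellinKernel :=
  ofVanishing (fun y => -deriv cutoff y) continuous_deriv_cutoff.neg
    (fun _ hy => by rw [deriv_cutoff_of_two_lt hy, neg_zero]) m

/-- The condition under which `κ` is integrable near the origin, uniformly for `s` in compact
subsets of `{s | -K < re s}`. -/
def IsRegular (κ : MellinKernel) (K : ℕ) : Prop :=
  (∀ y < 1, κ.weight y = 0) ∨ K < κ.shift

theorem isRegular_tail (K : ℕ) : tail.IsRegular K :=
  .inl fun y hy => by simp [tail, cutoff_of_le_one hy.le]

theorem isRegular_headDeriv (m K : ℕ) : (headDeriv m).IsRegular K :=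
  .inl fun y hy => by simp [headDeriv, ofVanishing, deriv_cutoff_of_lt_one hy]

theorem isRegular_head {m K : ℕ} (h : K < m) : (head m).IsRegular K := .inr h

variable (κ : MellinKernel)

theorem measurable_density (s : ℂ) : Measurable (κ.density s) := by
  have := κ.continuous_weight.measurable
  unfold density
  fun_prop

theorem norm_density (s : ℂ) {y : ℝ} (hy : 0 < y) :
    ‖κ.density s y‖ = |κ.weight y| * y ^ (s.re + κ.shift - 1) := by
  simp [density, norm_cpow_eq_rpow_re_of_pos hy]

theorem exists_exp_mul_norm_density_le {s : ℂ} {τ r : ℝ} (hτ : s.re + r ≤ τ)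
    (hκ : (∀ y < 1, κ.weight y = 0) ∨ τ + r ≤ s.re + κ.shift) :
    ∃ C, ∀ y, 0 < y → Real.exp (r * |Real.log y|) * ‖κ.density s y‖ ≤ C * y ^ (τ - 1) := by
  obtain ⟨B, hB⟩ := κ.exists_bound
  have bound_nonneg : 0 ≤ B := (abs_nonneg _).trans (hB 1 one_pos).1
  refine ⟨B, fun y hy => ?_⟩
  obtain ⟨weight_le, weight_mul_pow_le⟩ := hB y hy
  rw [κ.norm_density s hy]
  rcases lt_or_ge y 1 with hy₁ | hy₁
  · rcases hκ with hκ | hκ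
    · rw [hκ y hy₁, abs_zero, zero_mul, mul_zero]
      positivity
    · have exp_eq : Real.exp (r * |Real.log y|) = y ^ (-r) := by
        rw [abs_of_neg (Real.log_neg hy hy₁), Real.rpow_def_of_pos hy]
        ring_nf
      rw [exp_eq, mul_left_comm, ← Real.rpow_add hy]
      gcongr ?_ * ?_
      exact Real.rpow_le_rpow_of_exponent_ge hy hy₁.le (by linarith)
  · have exp_eq : Real.exp (r * |Real.log y|) = y ^ r := by
      rw [abs_of_nonneg (Real.log_nonneg hy₁), Real.rpow_def_of_pos hy, mul_comm]
    calc Real.exp (r * |Real.log y|) * (|κ.weight y| * y ^ (s.re + κ.shift - 1))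
        = |κ.weight y| * y ^ κ.shift * y ^ (s.re + r - 1) := by
          rw [exp_eq, ← Real.rpow_natCast, mul_left_comm, mul_assoc, ← Real.rpow_add hy,
            ← Real.rpow_add hy]
          ring_nf
      _ ≤ B * y ^ (τ - 1) := by
          gcongr ?_ * ?_
          exact Real.rpow_le_rpow_of_exponent_le hy₁ (by linarith)

end MellinKernel

section Integrability

variable {n : ℕ} {F : (Fin n → ℝ) → ℂ} {k : Fin n → MellinKernel} {s : Fin n → ℂ}

theorem exists_exp_mul_norm_prod_density_le {τ : Fin n → ℝ} {r : ℝ} (hτ : ∀ i, (s i).re + r ≤ τ i)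
    (hk : ∀ i, (∀ y < 1, (k i).weight y = 0) ∨ τ i + r ≤ (s i).re + (k i).shift) :
    ∃ C, ∀ y : Fin n → ℝ, (∀ i, 0 < y i) →
      Real.exp (r * ∑ i, |Real.log (y i)|) * ‖∏ i, (k i).density (s i) (y i)‖ ≤
        C * ∏ i, y i ^ (τ i - 1) := by
  choose C hC using fun i => (k i).exists_exp_mul_norm_density_le (hτ i) (hk i)
  refine ⟨∏ i, C i, fun y hy => ?_⟩
  rw [norm_prod, Finset.mul_sum, Real.exp_sum, ← Finset.prod_mul_distrib,
    ← Finset.prod_mul_distrib]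
  exact Finset.prod_le_prod (fun i _ => by positivity) fun i _ => hC i (y i) (hy i)

theorem measurable_mul_prod_density (hF : Continuous F) (k : Fin n → MellinKernel)
    (s : Fin n → ℂ) : Measurable fun y => F y * ∏ i, (k i).density (s i) (y i) := by
  have := hF.measurable
  have (i : Fin n) := (k i).measurable_density (s i)
  fun_prop

theorem integrable_exp_mul_norm_mul_prod_density (hF : Continuous F)
    (hd : SufficientDecayOn n (Quadrant n) F) {τ : Fin n → ℝ} {r : ℝ} (hτ₀ : ∀ i, 0 < τ i)
    (hτ₁ : ∑ i, τ i < 1) (hτ : ∀ i, (s i).re + r ≤ τ i)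
    (hk : ∀ i, (∀ y < 1, (k i).weight y = 0) ∨ τ i + r ≤ (s i).re + (k i).shift) :
    Integrable (fun y => Real.exp (r * ∑ i, |Real.log (y i)|) *
      ‖F y * ∏ i, (k i).density (s i) (y i)‖) (orthantMeasure n) := by
  obtain ⟨C, hC⟩ := exists_exp_mul_norm_prod_density_le hτ hk
  have hmeas := (measurable_mul_prod_density hF k s).norm
  refine ((hd.integrable_norm_mul_prod_rpow hF hτ₀ hτ₁).const_mul C).mono'
    (Measurable.aestronglyMeasurable (by fun_prop)) ?_
  filter_upwards [ae_orthantMeasure_pos n] with y hy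
  calc _ = ‖F y‖ * (Real.exp (r * ∑ i, |Real.log (y i)|) *
        ‖∏ i, (k i).density (s i) (y i)‖) := by
        rw [Real.norm_of_nonneg (by positivity), norm_mul, mul_left_comm]
    _ ≤ ‖F y‖ * (C * ∏ i, y i ^ (τ i - 1)) := by
        gcongr _ * ?_
        exact hC y hy
    _ = C * (‖F y‖ * ∏ i, y i ^ (τ i - 1)) := mul_left_comm _ _ _

end Integrability

section Tubes

/-- The tube domain over which the Mellin integrals converge absolutely. -/
def convergenceTube (n : ℕ) : Set (Fin n → ℂ) :=
  {s | (∀ i, 0 < (s i).re) ∧ ∑ i, (s i).re < 1}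

/-- The tube domain reached after finitely many integrations by parts, their number growing
with `K`. -/
def continuationTube (n : ℕ) (K : ℝ) : Set (Fin n → ℂ) :=
  {s | (∀ i, -K < (s i).re) ∧ ∑ i, max (s i).re 0 < 1}

theorem isOpen_setOf_forall_lt_re (n : ℕ) (a : ℝ) : IsOpen {s : Fin n → ℂ | ∀ i, a < (s i).re} := by
  simp only [Set.ofPred_forall]
  exact isOpen_iInter_of_finite fun i => isOpen_lt (by fun_prop) (by fun_prop)

variable (n : ℕ)

theorem isOpen_convergenceTube : IsOpen (convergenceTube n) := by
  have isOpen_sum : IsOpen {s : Fin n → ℂ | ∑ i, (s i).re < 1} :=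
    isOpen_lt (by fun_prop) (by fun_prop)
  exact (isOpen_setOf_forall_lt_re n 0).inter isOpen_sum

theorem convergenceTube_nonempty : (convergenceTube n).Nonempty := by
  refine ⟨fun _ => ((1 / (n + 1) : ℝ) : ℂ), fun i => ?_, ?_⟩
  · rw [ofReal_re]
    positivity
  · simp only [ofReal_re, Finset.sum_const, Finset.card_univ, Fintype.card_fin, nsmul_eq_mul]
    rw [mul_one_div, div_lt_one (by positivity)]
    exact lt_add_one _

theorem isOpen_continuationTube (K : ℝ) : IsOpen (continuationTube n K) := by
  have isOpen_sum : IsOpen {s : Fin n → ℂ | ∑ i, max (s i).re 0 < 1} :=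
    isOpen_lt (by fun_prop) (by fun_prop)
  exact (isOpen_setOf_forall_lt_re n (-K)).inter isOpen_sum

theorem convex_continuationTube (K : ℝ) : Convex ℝ (continuationTube n K) := by
  let reProj (i : Fin n) : (Fin n → ℂ) →ₗ[ℝ] ℝ := reLm ∘ₗ LinearMap.proj i
  have convex_re_gt : Convex ℝ {s : Fin n → ℂ | ∀ i, -K < (s i).re} := by
    simp only [Set.ofPred_forall]
    exact convex_iInter fun i => (convex_Ioi (-K)).linear_preimage (reProj i)
  have convexOn_max (i : Fin n) : ConvexOn ℝ univ fun s : Fin n → ℂ => max (s i).re 0 :=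
    ((reProj i).convexOn convex_univ).sup (convexOn_const 0 convex_univ)
  have convexOn_sum : ConvexOn ℝ univ fun s : Fin n → ℂ => ∑ i, max (s i).re 0 := by
    refine ⟨convex_univ, fun s _ t _ a b ha hb hab => ?_⟩
    rw [Finset.smul_sum, Finset.smul_sum, ← Finset.sum_add_distrib]
    exact Finset.sum_le_sum fun i _ => (convexOn_max i).2 (mem_univ s) (mem_univ t) ha hb hab
  have convex_sum_lt : Convex ℝ {s : Fin n → ℂ | ∑ i, max (s i).re 0 < 1} := by
    simpa only [mem_univ, true_and] using convexOn_sum.convex_lt 1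
  exact convex_re_gt.inter convex_sum_lt

theorem continuationTube_mono : Monotone (continuationTube n) := fun _ _ hKL _ hs =>
  ⟨fun i => (neg_le_neg hKL).trans_lt (hs.1 i), hs.2⟩

variable {n}

theorem convergenceTube_subset_continuationTube {K : ℝ} (hK : 0 ≤ K) :
    convergenceTube n ⊆ continuationTube n K := fun s hs =>
  ⟨fun i => (neg_nonpos.2 hK).trans_lt (hs.1 i), by simpa only [max_eq_left (hs.1 _).le] using hs.2⟩

theorem iUnion_continuationTube :
    ⋃ K : ℕ, continuationTube n K = {s | ∑ i, max (s i).re 0 < 1} := by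
  ext s
  refine ⟨fun hs => (mem_iUnion.1 hs).elim fun _ hK => hK.2, fun hs => mem_iUnion.2 ?_⟩
  choose N hN using fun i => exists_nat_gt (-(s i).re)
  refine ⟨∑ i, N i, fun i => neg_lt.1 ((hN i).trans_le ?_), hs⟩
  exact_mod_cast Finset.single_le_sum (fun _ _ => Nat.zero_le _) (Finset.mem_univ i)

theorem exists_exponents {s : Fin n → ℂ} {K : ℕ} {k : Fin n → MellinKernel}
    (hs : s ∈ continuationTube n K) (hk : ∀ i, (k i).IsRegular K) :
    ∃ (τ : Fin n → ℝ) (r : ℝ), 0 < r ∧ (∀ i, 0 < τ i) ∧ ∑ i, τ i < 1 ∧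
      (∀ i, (s i).re + r ≤ τ i) ∧
      ∀ i, (∀ y < 1, (k i).weight y = 0) ∨ τ i + r ≤ (s i).re + (k i).shift := by
  have sum_lt : ∀ᶠ ε in 𝓝[>] (0 : ℝ), ∑ i, (max (s i).re 0 + ε) < 1 :=
    nhdsWithin_le_nhds <| (isOpen_lt (by fun_prop) continuous_const).mem_nhds (by simpa using hs.2)
  have le_shift (i : Fin n) : ∀ᶠ ε in 𝓝[>] (0 : ℝ), (∀ y < 1, (k i).weight y = 0) ∨
      max (s i).re 0 + ε + ε ≤ (s i).re + (k i).shift := by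
    rcases hk i with hw | hKm
    · exact .of_forall fun _ => .inl hw
    · have hKm' : (K : ℝ) + 1 ≤ (k i).shift := by exact_mod_cast hKm
      have max_lt_shift : max (s i).re 0 < (s i).re + (k i).shift := by
        have hre := hs.1 i
        exact max_lt (by linarith [K.cast_nonneg (α := ℝ)]) (by linarith [K.cast_nonneg (α := ℝ)])
      have lt_shift : ∀ᶠ ε in 𝓝 (0 : ℝ), max (s i).re 0 + ε + ε < (s i).re + (k i).shift :=
        (isOpen_lt (by fun_prop) continuous_const).mem_nhds (by simpa using max_lt_shift)
      exact nhdsWithin_le_nhds <| lt_shift.mono fun ε hε => .inr hε.le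
  obtain ⟨ε, hsum, hshift, hε : 0 < ε⟩ :=
    (sum_lt.and ((eventually_all.2 le_shift).and self_mem_nhdsWithin)).exists
  exact ⟨fun i => max (s i).re 0 + ε, ε, hε, fun i => by positivity, hsum,
    fun i => add_le_add_left (le_max_left _ _) _, hshift⟩

end Tubes

section MellinTransform

variable {n : ℕ} {F : (Fin n → ℝ) → ℂ} {k : Fin n → MellinKernel} {s : Fin n → ℂ}

/-- The Mellin transform of `F` with the kernel `k i` in the `i`-th variable; it is `Λ(F, s)` when
every kernel is `MellinKernel.one`. -/
noncomputable def mellinTransform (F : (Fin n → ℝ) → ℂ) (k : Fin n → MellinKernel)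
    (s : Fin n → ℂ) : ℂ :=
  ∫ y, F y * ∏ i, (k i).eval (s i) (y i) ∂orthantMeasure n

theorem mul_prod_eval (F : (Fin n → ℝ) → ℂ) (k : Fin n → MellinKernel) (s : Fin n → ℂ)
    (y : Fin n → ℝ) : F y * ∏ i, (k i).eval (s i) (y i) =
      (∏ i, (Gamma (s i + (k i).shift))⁻¹) * (F y * ∏ i, (k i).density (s i) (y i)) := by
  simp only [MellinKernel.eval, Finset.prod_mul_distrib, mul_left_comm]

theorem mellinTransform_eq (F : (Fin n → ℝ) → ℂ) (k : Fin n → MellinKernel) (s : Fin n → ℂ) :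
    mellinTransform F k s = (∏ i, (Gamma (s i + (k i).shift))⁻¹) *
      ∫ y, F y * ∏ i, (k i).density (s i) (y i) ∂orthantMeasure n := by
  simp only [mellinTransform, mul_prod_eval, integral_const_mul]

theorem integrable_mul_prod_density (hF : Continuous F)
    (hd : SufficientDecayOn n (Quadrant n) F) (k : Fin n → MellinKernel)
    (hs : s ∈ convergenceTube n) :
    Integrable (fun y => F y * ∏ i, (k i).density (s i) (y i)) (orthantMeasure n) := by
  have h := integrable_exp_mul_norm_mul_prod_density (k := k) (s := s) (r := 0) hF hd hs.1 hs.2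
    (by simp) (by simp)
  simp only [zero_mul, Real.exp_zero, one_mul] at h
  exact (integrable_norm_iff (measurable_mul_prod_density hF k s).aestronglyMeasurable).1 h

theorem integrable_mul_prod_eval (hF : Continuous F)
    (hd : SufficientDecayOn n (Quadrant n) F) (k : Fin n → MellinKernel)
    (hs : s ∈ convergenceTube n) :
    Integrable (fun y => F y * ∏ i, (k i).eval (s i) (y i)) (orthantMeasure n) := by
  simp only [mul_prod_eval]
  exact (integrable_mul_prod_density hF hd k hs).const_mul _

/-- The linear form `z ↦ ∑ i, log (y i) * z i`, which generates the dependence of `∏ i, y i ^ z i`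
on `z`. -/
noncomputable def logForm (y : Fin n → ℝ) : (Fin n → ℂ) →L[ℂ] ℂ :=
  ∑ i, (Real.log (y i) : ℂ) • ContinuousLinearMap.proj i

theorem norm_logForm_le (y : Fin n → ℝ) : ‖logForm y‖ ≤ ∑ i, |Real.log (y i)| := by
  refine ContinuousLinearMap.opNorm_le_bound _ (by positivity) fun z => ?_
  rw [logForm, _root_.sum_apply, Finset.sum_mul]
  refine norm_sum_le_of_le _ fun i _ => ?_
  rw [_root_.smul_apply, ContinuousLinearMap.proj_apply, norm_smul, norm_real,
    Real.norm_eq_abs]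
  gcongr
  exact norm_le_pi_norm z i

theorem stronglyMeasurable_logForm : StronglyMeasurable (logForm (n := n)) := by
  refine Finset.stronglyMeasurable_fun_sum _ fun i _ => StronglyMeasurable.smul_const ?_ _
  exact Measurable.stronglyMeasurable (by fun_prop)

theorem prod_density_eq_mul_exp_logForm (k : Fin n → MellinKernel) (s z : Fin n → ℂ)
    {y : Fin n → ℝ} (hy : ∀ i, 0 < y i) :
    ∏ i, (k i).density (z i) (y i) =
      (∏ i, (k i).density (s i) (y i)) * exp (logForm y (z - s)) := by
  rw [logForm, _root_.sum_apply, exp_sum, ← Finset.prod_mul_distrib]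
  refine Finset.prod_congr rfl fun i _ => ?_
  have hyi : (y i : ℂ) ≠ 0 := ofReal_ne_zero.2 (hy i).ne'
  rw [_root_.smul_apply, ContinuousLinearMap.proj_apply, smul_eq_mul,
    ofReal_log (hy i).le, MellinKernel.density, MellinKernel.density, mul_assoc,
    ← cpow_def_of_ne_zero hyi, ← cpow_add _ _ hyi, Pi.sub_apply]
  ring_nf

theorem analyticAt_mellinTransform (hF : Continuous F) (hd : SufficientDecayOn n (Quadrant n) F)
    {K : ℕ} (hk : ∀ i, (k i).IsRegular K) (hs : s ∈ continuationTube n K) :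
    AnalyticAt ℂ (mellinTransform F k) s := by
  obtain ⟨τ, r, hr, hτ₀, hτ₁, hτ, hshift⟩ := exists_exponents hs hk
  have integrable_majorant : Integrable (fun y => Real.exp (r * ‖logForm y‖) *
      ‖F y * ∏ i, (k i).density (s i) (y i)‖) (orthantMeasure n) := by
    have hlog := stronglyMeasurable_logForm (n := n).norm.measurable
    have hmeas := (measurable_mul_prod_density hF k s).norm
    refine (integrable_exp_mul_norm_mul_prod_density hF hd hτ₀ hτ₁ hτ hshift).mono'
      (Measurable.aestronglyMeasurable (by fun_prop)) (.of_forall fun y => ?_)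
    rw [Real.norm_of_nonneg (by positivity)]
    gcongr
    exact norm_logForm_le y
  have analytic_integral := analyticAt_integral_exp_mul hr
    stronglyMeasurable_logForm.aestronglyMeasurable
    (measurable_mul_prod_density hF k s).aestronglyMeasurable integrable_majorant s
  have analytic_gamma :
      AnalyticAt ℂ (fun z : Fin n → ℂ => ∏ i, (Gamma (z i + (k i).shift))⁻¹) s := by
    refine Finset.analyticAt_fun_prod _ fun i _ => ?_
    refine AnalyticAt.comp (f := fun z : Fin n → ℂ => z i + (k i).shift)
      (differentiable_one_div_Gamma.analyticAt _) ?_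
    exact ((ContinuousLinearMap.proj (R := ℂ) (φ := fun _ : Fin n => ℂ) i).analyticAt s).add
      analyticAt_const
  refine (analytic_gamma.mul analytic_integral).congr (.of_forall fun z => ?_)
  rw [mellinTransform_eq, Pi.mul_apply]
  congr 1
  refine integral_congr_ae ?_
  filter_upwards [ae_orthantMeasure_pos n] with y hy
  rw [prod_density_eq_mul_exp_logForm k s z hy, mul_assoc]

end MellinTransform

section IntegrationByParts

open Function

theorem integral_orthantMeasure_eq_zero {n : ℕ} {E : Type*} [NormedAddCommGroup E]
    [NormedSpace ℝ E] (i : Fin n) {g : (Fin n → ℝ) → E} (hg : Integrable g (orthantMeasure n))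
    (h : ∀ y : Fin n → ℝ, (∀ j, 0 < y j) → IntegrableOn (fun x => g (update y i x)) (Ioi 0) →
      ∫ x in Ioi 0, g (update y i x) = 0) :
    ∫ y, g y ∂orthantMeasure n = 0 := by
  obtain ⟨m, rfl⟩ : ∃ m, n = m + 1 := Nat.exists_eq_succ_of_ne_zero (Fin.pos i).ne'
  have hmp := (measurePreserving_piFinSuccAbove
    (fun _ : Fin (m + 1) => volume.restrict (Ioi (0 : ℝ))) i).symm
  have hg' := (hmp.integrable_comp_emb (MeasurableEquiv.measurableEmbedding _)).2 hg
  rw [← hmp.integral_comp']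
  refine (integral_prod_symm _ hg').trans (integral_eq_zero_of_ae ?_)
  filter_upwards [hg'.prod_left_ae, ae_orthantMeasure_pos m] with z hz hzpos
  have insertNth_pos (j : Fin (m + 1)) : 0 < (i.insertNth 1 z : Fin (m + 1) → ℝ) j := by
    revert j
    refine i.forall_iff_succAbove.2 ⟨?_, fun l => ?_⟩
    · simp
    · simpa using hzpos l
  have hslice := h _ insertNth_pos
  simp only [Fin.update_insertNth] at hslice
  exact hslice hz

theorem integral_orthantMeasure_eq_zero_of_hasDerivAt {n : ℕ} {E : Type*} [NormedAddCommGroup E]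
    [NormedSpace ℝ E] [CompleteSpace E] (i : Fin n) {f g : (Fin n → ℝ) → E}
    (hg : Integrable g (orthantMeasure n))
    (hcont : ∀ y : Fin n → ℝ, (∀ j, 0 < y j) →
      ContinuousWithinAt (fun x => f (update y i x)) (Ici 0) 0)
    (hzero : ∀ y : Fin n → ℝ, (∀ j, 0 < y j) → f (update y i 0) = 0)
    (hderiv : ∀ y : Fin n → ℝ, (∀ j, 0 < y j) →
      HasDerivAt (fun x => f (update y i x)) (g y) (y i))
    (htop : ∀ y : Fin n → ℝ, (∀ j, 0 < y j) → Tendsto (fun x => f (update y i x)) atTop (𝓝 0)) :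
    ∫ y, g y ∂orthantMeasure n = 0 := by
  refine integral_orthantMeasure_eq_zero i hg fun y hy hint => ?_
  have hderiv' (x : ℝ) (hx : 0 < x) :
      HasDerivAt (fun x => f (update y i x)) (g (update y i x)) x := by
    have update_pos : ∀ j, 0 < update y i x j :=
      (forall_update_iff y fun _ z => 0 < z).2 ⟨hx, fun j _ => hy j⟩
    simpa only [update_idem, update_self] using hderiv _ update_pos
  rw [integral_Ioi_of_hasDerivAt_of_tendsto (hcont y hy) hderiv' hint (htop y hy), hzero y hy,
    sub_zero]

namespace MellinKernel

variable {m : ℕ} {s : ℂ}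

theorem eval_one (s : ℂ) (y : ℝ) : one.eval s y = (head 0).eval s y + tail.eval s y := by
  simp only [eval, density, one, head, ofVanishing, tail]
  push_cast
  ring

theorem eval_head_succ (m : ℕ) (s : ℂ) (y : ℝ) :
    (head (m + 1)).eval s y = (Gamma (s + m + 1))⁻¹ * (cutoff y * (y : ℂ) ^ (s + m)) := by
  simp only [eval, density, head, ofVanishing, Nat.cast_add_one, ← add_assoc, add_sub_cancel_right]

theorem hasDerivAt_eval_head_succ (m : ℕ) (s : ℂ) {y : ℝ} (hy : 0 < y) :
    HasDerivAt ((head (m + 1)).eval s) ((head m).eval s y - (headDeriv (m + 1)).eval s y) y := by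
  have hasDerivAt_cpow : HasDerivAt (fun x : ℝ => (x : ℂ) ^ (s + m))
      ((s + m) * (y : ℂ) ^ (s + m - 1)) y := by
    simpa using ((hasDerivAt_id (y : ℂ)).cpow_const (.inl (by simpa using hy))).comp_ofReal
  have hasDerivAt_mul := ((hasDerivAt_cutoff y).ofReal_comp.mul hasDerivAt_cpow).const_mul
    (Gamma (s + m + 1))⁻¹
  refine (hasDerivAt_mul.congr_deriv ?_).congr_of_eventuallyEq
    (.of_forall fun x => eval_head_succ m s x)
  simp only [eval, density, head, headDeriv, ofVanishing, Nat.cast_add_one, ← add_assoc,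
    add_sub_cancel_right, one_div_Gamma_eq_self_mul_one_div_Gamma_add_one (s + m), ofReal_neg]
  ring

theorem continuous_eval_head_succ (hs : 0 < s.re) (m : ℕ) : Continuous ((head (m + 1)).eval s) := by
  have hre : 0 < (s + m).re := by
    rw [add_re, natCast_re]
    positivity
  rw [funext (eval_head_succ m s)]
  exact continuous_const.mul ((continuous_ofReal.comp contDiff_cutoff.continuous).mul
    (continuous_ofReal_cpow_const hre))

theorem eval_head_succ_zero (hs : 0 < s.re) (m : ℕ) : (head (m + 1)).eval s 0 = 0 := by
  have hne : s + m ≠ 0 := fun h => by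
    have hre := congrArg re h
    rw [add_re, natCast_re, zero_re] at hre
    linarith [(m.cast_nonneg : (0 : ℝ) ≤ m)]
  rw [eval_head_succ, ofReal_zero, zero_cpow hne, mul_zero, mul_zero]

theorem eval_head_succ_of_two_le (m : ℕ) (s : ℂ) {y : ℝ} (hy : 2 ≤ y) :
    (head (m + 1)).eval s y = 0 := by
  rw [eval_head_succ, cutoff_of_two_le hy, ofReal_zero, zero_mul, mul_zero]

end MellinKernel

open MellinKernel

variable {n : ℕ} {F : (Fin n → ℝ) → ℂ} {s : Fin n → ℂ}

theorem prod_update_eval_update (k : Fin n → MellinKernel) (i : Fin n) (κ : MellinKernel)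
    (s : Fin n → ℂ) (y : Fin n → ℝ) (x : ℝ) :
    ∏ j, (update k i κ j).eval (s j) (update y i x j) =
      κ.eval (s i) x * ∏ j ∈ Finset.univ.erase i, (k j).eval (s j) (y j) := by
  rw [← Finset.mul_prod_erase Finset.univ _ (Finset.mem_univ i), update_self, update_self]
  congr 1
  refine Finset.prod_congr rfl fun j hj => ?_
  rw [update_of_ne (Finset.ne_of_mem_erase hj), update_of_ne (Finset.ne_of_mem_erase hj)]

theorem prod_update_eval (k : Fin n → MellinKernel) (i : Fin n) (κ : MellinKernel) (s : Fin n → ℂ)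
    (y : Fin n → ℝ) : ∏ j, (update k i κ j).eval (s j) (y j) =
      κ.eval (s i) (y i) * ∏ j ∈ Finset.univ.erase i, (k j).eval (s j) (y j) := by
  simpa only [update_eq_self] using prod_update_eval_update k i κ s y (y i)

theorem mellinTransform_update_one (hF : Continuous F) (hd : SufficientDecayOn n (Quadrant n) F)
    (k : Fin n → MellinKernel) (i : Fin n) (hs : s ∈ convergenceTube n) :
    mellinTransform F (update k i one) s =
      mellinTransform F (update k i (head 0)) s + mellinTransform F (update k i tail) s := by
  unfold mellinTransform
  rw [← integral_add (integrable_mul_prod_eval hF hd _ hs) (integrable_mul_prod_eval hF hd _ hs)]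
  simp only [prod_update_eval, eval_one, add_mul, mul_add]

theorem hasDerivAt_comp_update (hF : Differentiable ℝ F) (i : Fin n) (y : Fin n → ℝ) :
    HasDerivAt (fun x => F (update y i x)) (-pderivNeg n i F y) (y i) := by
  have hcomp := (hF (update y i (y i))).hasFDerivAt.comp_hasDerivAt (y i)
    (hasDerivAt_update y i (y i))
  rwa [update_eq_self, ← neg_neg (fderiv ℝ F y _)] at hcomp

theorem mellinTransform_update_head (hF : ContDiff ℝ 1 F)
    (hd : SufficientDecayOn n (Quadrant n) F) (i : Fin n)
    (hd' : SufficientDecayOn n (Quadrant n) (pderivNeg n i F)) (k : Fin n → MellinKernel) (m : ℕ)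
    (hs : s ∈ convergenceTube n) :
    mellinTransform F (update k i (head m)) s =
      mellinTransform (pderivNeg n i F) (update k i (head (m + 1))) s +
        mellinTransform F (update k i (headDeriv (m + 1))) s := by
  have hF' : Continuous (pderivNeg n i F) :=
    ((hF.continuous_fderiv one_ne_zero).clm_apply continuous_const).neg
  have integrable_head := integrable_mul_prod_eval hF.continuous hd (update k i (head m)) hs
  have integrable_head_succ := integrable_mul_prod_eval hF' hd' (update k i (head (m + 1))) hs
  have integrable_headDeriv :=
    integrable_mul_prod_eval hF.continuous hd (update k i (headDeriv (m + 1))) hs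
  unfold mellinTransform
  rw [← integral_add integrable_head_succ integrable_headDeriv, ← sub_eq_zero,
    ← integral_sub integrable_head (integrable_head_succ.fun_add integrable_headDeriv)]
  refine integral_orthantMeasure_eq_zero_of_hasDerivAt i
    (f := fun y => F y * ∏ j, (update k i (head (m + 1)) j).eval (s j) (y j))
    (integrable_head.sub (integrable_head_succ.fun_add integrable_headDeriv)) ?_ ?_ ?_ ?_
  all_goals intro y hy; simp only [prod_update_eval_update, prod_update_eval]
  · have := continuous_eval_head_succ (hs.1 i) m
    have := hF.continuous
    exact Continuous.continuousWithinAt (by fun_prop)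
  · rw [eval_head_succ_zero (hs.1 i), zero_mul, mul_zero]
  · refine ((hasDerivAt_comp_update (hF.differentiable one_ne_zero) i y).mul
      ((hasDerivAt_eval_head_succ m (s i) (hy i)).mul_const _)).congr_deriv ?_
    rw [update_eq_self]
    ring
  · refine tendsto_const_nhds.congr' ?_
    filter_upwards [eventually_ge_atTop 2] with x hx
    rw [eval_head_succ_of_two_le m (s i) hx, zero_mul, mul_zero]

end IntegrationByParts

section Continuation

open Function MellinKernel

variable {n : ℕ} {F F₁ F₂ H : (Fin n → ℝ) → ℂ} {K : ℕ} {k k₁ k₂ : Fin n → MellinKernel}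

/-- The Mellin transform of `F` with kernels `k` extends analytically from the tube of convergence
to `continuationTube n K`. -/
def HasMellinContinuation (K : ℕ) (F : (Fin n → ℝ) → ℂ) (k : Fin n → MellinKernel) : Prop :=
  ∃ Φ, AnalyticOnNhd ℂ Φ (continuationTube n K) ∧
    EqOn Φ (mellinTransform F k) (convergenceTube n)

theorem HasMellinContinuation.of_eqOn_add (h₁ : HasMellinContinuation K F₁ k₁)
    (h₂ : HasMellinContinuation K F₂ k₂)
    (h : ∀ s ∈ convergenceTube n,
      mellinTransform F k s = mellinTransform F₁ k₁ s + mellinTransform F₂ k₂ s) :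
    HasMellinContinuation K F k := by
  obtain ⟨Φ₁, analytic₁, eqOn₁⟩ := h₁
  obtain ⟨Φ₂, analytic₂, eqOn₂⟩ := h₂
  refine ⟨Φ₁ + Φ₂, analytic₁.add analytic₂, fun s hs => ?_⟩
  rw [h s hs, Pi.add_apply, eqOn₁ hs, eqOn₂ hs]

theorem hasMellinContinuation_of_isRegular (hF : Continuous F)
    (hd : SufficientDecayOn n (Quadrant n) F) (hk : ∀ i, (k i).IsRegular K) :
    HasMellinContinuation K F k :=
  ⟨mellinTransform F k, fun _ hs => analyticAt_mellinTransform hF hd hk hs, fun _ _ => rfl⟩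

theorem contDiff_pderivList (hH : ContDiff ℝ (⊤ : ℕ∞) H) (l : List (Fin n)) :
    ContDiff ℝ (⊤ : ℕ∞) (pderivList n l H) := by
  induction l with
  | nil => exact hH
  | cons i l ih =>
    exact ((ih.fderiv_right (m := (⊤ : ℕ∞)) (by simp)).clm_apply contDiff_const).neg

theorem hasMellinContinuation_update_head (hH : ContDiff ℝ (⊤ : ℕ∞) H)
    (hd : ∀ l, SufficientDecayOn n (Quadrant n) (pderivList n l H)) {i : Fin n}
    (h : ∀ l κ, κ.IsRegular K → HasMellinContinuation K (pderivList n l H) (update k i κ))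
    (m : ℕ) (l : List (Fin n)) :
    HasMellinContinuation K (pderivList n l H) (update k i (head m)) := by
  obtain ⟨d, hd'⟩ : ∃ d, K < m + d := ⟨K + 1, by lia⟩
  induction d generalizing m l with
  | zero => exact h l _ (isRegular_head hd')
  | succ d ih =>
    refine (ih (m + 1) (i :: l) (by lia)).of_eqOn_add
      (h l (headDeriv (m + 1)) (isRegular_headDeriv _ K)) fun s hs => ?_
    exact mellinTransform_update_head ((contDiff_pderivList hH l).of_le (by simp)) (hd l) i
      (hd (i :: l)) k m hs

theorem hasMellinContinuation_update_one (hH : ContDiff ℝ (⊤ : ℕ∞) H)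
    (hd : ∀ l, SufficientDecayOn n (Quadrant n) (pderivList n l H)) {i : Fin n}
    (h : ∀ l κ, κ.IsRegular K → HasMellinContinuation K (pderivList n l H) (update k i κ))
    (l : List (Fin n)) : HasMellinContinuation K (pderivList n l H) (update k i one) :=
  (hasMellinContinuation_update_head hH hd h 0 l).of_eqOn_add (h l tail (isRegular_tail K))
    fun _ hs => mellinTransform_update_one (contDiff_pderivList hH l).continuous (hd l) k i hs

theorem hasMellinContinuation_of_one_or_isRegular (hH : ContDiff ℝ (⊤ : ℕ∞) H)
    (hd : ∀ l, SufficientDecayOn n (Quadrant n) (pderivList n l H)) (S : Finset (Fin n))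
    (hone : ∀ i ∈ S, k i = one) (hreg : ∀ i ∉ S, (k i).IsRegular K) (l : List (Fin n)) :
    HasMellinContinuation K (pderivList n l H) k := by
  induction S using Finset.induction_on generalizing k l with
  | empty =>
    exact hasMellinContinuation_of_isRegular (contDiff_pderivList hH l).continuous (hd l)
      fun i => hreg i (Finset.notMem_empty i)
  | insert i S hi ih =>
    rw [← update_eq_self i k, hone i (Finset.mem_insert_self i S)]
    refine hasMellinContinuation_update_one hH hd (fun l κ hκ => ih (fun j hj => ?_)
      (fun j hj => ?_) l) l
    · rw [update_of_ne (ne_of_mem_of_not_mem hj hi), hone j (Finset.mem_insert_of_mem hj)]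
    · rcases eq_or_ne j i with rfl | hji
      · rwa [update_self]
      · rw [update_of_ne hji]
        exact hreg j (by simp [hji, hj])

theorem exists_analyticOnNhd_eqOn_mellinTransform_one (hH : ContDiff ℝ (⊤ : ℕ∞) H)
    (hd : ∀ l, SufficientDecayOn n (Quadrant n) (pderivList n l H)) :
    ∃ Φ, AnalyticOnNhd ℂ Φ {s : Fin n → ℂ | ∑ i, max (s i).re 0 < 1} ∧
      EqOn Φ (mellinTransform H fun _ => one) (convergenceTube n) := by
  rw [← iUnion_continuationTube]
  refine exists_analyticOnNhd_iUnion ((continuationTube_mono n).comp Nat.mono_cast)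
    (fun K => isOpen_continuationTube n K)
    (fun K => (convex_continuationTube n K).isPreconnected) (isOpen_convergenceTube n)
    (convergenceTube_nonempty n)
    (fun K => convergenceTube_subset_continuationTube K.cast_nonneg) fun K => ?_
  exact hasMellinContinuation_of_one_or_isRegular hH hd Finset.univ (fun _ _ => rfl)
    (fun i hi => absurd (Finset.mem_univ i) hi) []

theorem prod_density_one (s : Fin n → ℂ) (y : Fin n → ℝ) :
    ∏ i, one.density (s i) (y i) = ∏ i, (y i : ℂ) ^ (s i - 1) := by
  simp [density, one]

theorem sum_max_re_lt_one (hn : 0 < n) {s : Fin n → ℂ} (hs : ∀ i, (s i).re < 1 / n) :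
    ∑ i, max (s i).re 0 < 1 := by
  have hn' : (0 : ℝ) < n := by exact_mod_cast hn
  calc ∑ i, max (s i).re 0 < ∑ _ : Fin n, (1 / n : ℝ) :=
        Finset.sum_lt_sum_of_nonempty ⟨⟨0, hn⟩, Finset.mem_univ _⟩
          fun i _ => max_lt (hs i) (by positivity)
    _ = 1 := by
        rw [Finset.sum_const, Finset.card_univ, Fintype.card_fin, nsmul_eq_mul,
          mul_one_div_cancel hn'.ne']

end Continuation

theorem mellin_quadrant_analytic_continuation_general (n : ℕ) (H : (Fin n → ℝ) → ℂ)
    (hsmooth : ContDiff ℝ (⊤ : ℕ∞) H)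
    (hdecay : ∀ l : List (Fin n), SufficientDecayOn n (Quadrant n) (pderivList n l H)) :
    ∃ Φ : (Fin n → ℂ) → ℂ,
      AnalyticOnNhd ℂ Φ {s : Fin n → ℂ | ∑ i, max (s i).re 0 < 1} ∧
      ∀ s : Fin n → ℂ, (∀ i, 0 < (s i).re) → ∑ i, (s i).re < 1 →
        IntegrableOn (fun y : Fin n → ℝ => H y * ∏ i, ((y i : ℂ) ^ (s i - 1))) (Quadrant n) ∧
        Φ s = (∏ i, (Gamma (s i))⁻¹) *
          ∫ y in Quadrant n, H y * ∏ i, ((y i : ℂ) ^ (s i - 1)) := by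
  obtain ⟨Φ, hΦ, hΦ_eq⟩ := exists_analyticOnNhd_eqOn_mellinTransform_one hsmooth hdecay
  refine ⟨Φ, hΦ, fun s hpos hsum => ?_⟩
  have hs : s ∈ convergenceTube n := ⟨hpos, hsum⟩
  simp only [IntegrableOn, volume_restrict_quadrant, ← prod_density_one]
  refine ⟨integrable_mul_prod_density hsmooth.continuous (hdecay []) (fun _ => .one) hs, ?_⟩
  rw [hΦ_eq hs, mellinTransform_eq]
  simp only [MellinKernel.one, Nat.cast_zero, add_zero]

/-- let `H : (ℝ_{≥0})^n → ℂ` be `C^∞` with all partial derivatives of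
sufficient decay at infinity. Then
`Λ(H,s) = (∏ 1/Γ(s_i)) ∫_{(ℝ_{≥0})^n} H(y) ∏ y_i^{s_i-1} dy` converges absolutely for
`0 < Re s_i < 1/n` and extends analytically to `{s : Re s_i < 1/n ∀ i}`. -/
theorem mellin_quadrant_analytic_continuation
    (n : ℕ) (hn : 0 < n) (H : (Fin n → ℝ) → ℂ)
    (hsmooth : ContDiff ℝ (⊤ : ℕ∞) H)
    (hdecay : ∀ l : List (Fin n), SufficientDecayOn n (Quadrant n) (pderivList n l H)) :
    ∃ Φ : (Fin n → ℂ) → ℂ,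
      AnalyticOnNhd ℂ Φ {s : Fin n → ℂ | ∀ i, (s i).re < 1 / n} ∧
      ∀ s : Fin n → ℂ, (∀ i, 0 < (s i).re ∧ (s i).re < 1 / n) →
        MeasureTheory.IntegrableOn
          (fun y : Fin n → ℝ => H y * ∏ i, ((y i : ℂ) ^ (s i - 1))) (Quadrant n) ∧
        Φ s = (∏ i, (Complex.Gamma (s i))⁻¹) *
            ∫ y in Quadrant n, H y * ∏ i, ((y i : ℂ) ^ (s i - 1)) := by
  obtain ⟨Φ, hΦ, hΦ_eq⟩ := mellin_quadrant_analytic_continuation_general n H hsmooth hdecay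
  refine ⟨Φ, hΦ.mono fun s hs => sum_max_re_lt_one hn hs,
    fun s hs => hΦ_eq s (fun i => (hs i).1) ?_⟩
  simpa only [max_eq_left (hs _).1.le] using sum_max_re_lt_one hn fun i => (hs i).2
end
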